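/- arXiv:1401.4564 — 2 statements merged into one kernel-verified Lean document; each statement's English description precedes it below -/
import Mathlib

section
/- Let (μ,K) ∈ ℚ_{>0} × ℕ* with K ∈ μℕ*, let ε > 0, and define Ω := ∩_{ℓ∈K^{−1}ℤ} {z ∈ ℂ* : |z + q^ℓ| ≥ ε|q^ℓ|}. Then there exists C > 0 such that for all z ∈ Ω: |Θ_{q^{1/μ}}(z)| ≥ C · Θ_{|q|^{1/μ}}(|z|). -/
/-- The Jacobi theta function `Θ_q(z) = ∑_{ℓ ∈ ℤ} q^{-ℓ(ℓ+1)/2} z^ℓ`. -/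
noncomputable def theta (q z : ℂ) : ℂ := ∑' ℓ : ℤ, q ^ (-(ℓ * (ℓ + 1) / 2)) * z ^ ℓ

/-- The real theta function `Θ_Q(x) = ∑_{ℓ ∈ ℤ} Q^{-ℓ(ℓ+1)/2} x^ℓ` for real `Q, x`. -/
noncomputable def thetaR (Q x : ℝ) : ℝ := ∑' ℓ : ℤ, Q ^ (-(ℓ * (ℓ + 1) / 2)) * x ^ ℓ

/-- Rational powers `q^α := exp(α log q)` of a complex number, via the principal logarithm. -/
noncomputable def qpow (q : ℂ) (α : ℚ) : ℂ := Complex.exp ((α : ℂ) * Complex.log q)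

/-- Rational (real) powers `b^α` for a real base. -/
noncomputable def qpowR (b : ℝ) (α : ℚ) : ℝ := b ^ (α : ℝ)

open Filter Topology

theorem tri_succ (j : ℤ) : (j + 1) * (j + 1 + 1) / 2 = j * (j + 1) / 2 + (j + 1) := by
  rw [show (j + 1) * (j + 1 + 1) = j * (j + 1) + (j + 1) * 2 by ring,
    Int.add_mul_ediv_right _ _ (by norm_num)]

/-- finite `q`-Pochhammer symbol -/
noncomputable def pch (x : ℂ) (n : ℕ) : ℂ := ∏ k ∈ Finset.range n, (1 + -(x ^ (k + 1)))

/-- reciprocal `q`-Pochhammer symbol, extended by zero -/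
noncomputable def rch (x : ℂ) (n : ℤ) : ℂ := if 0 ≤ n then (pch x n.toNat)⁻¹ else 0

theorem fac_ne (x : ℂ) (hx : ‖x‖ < 1) (k : ℕ) : 1 + -(x ^ (k + 1)) ≠ 0 := by
  intro h
  have h1 : x ^ (k + 1) = 1 := by linear_combination -h
  have h2 : ‖x‖ ^ (k + 1) = 1 := by rw [← norm_pow, h1, norm_one]
  have := pow_lt_one₀ (norm_nonneg x) hx (Nat.succ_ne_zero k)
  simp only [Nat.succ_eq_add_one] at this
  linarith

theorem pch_ne (x : ℂ) (hx : ‖x‖ < 1) (n : ℕ) : pch x n ≠ 0 :=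
  Finset.prod_ne_zero_iff.2 fun k _ => fac_ne x hx k

theorem rch_rec (x : ℂ) (hx : ‖x‖ < 1) (n : ℤ) : rch x (n - 1) = (1 - x ^ n) * rch x n := by
  rcases lt_trichotomy n 0 with h | h | h
  · have h1 : ¬ (0 ≤ n) := by omega
    have h2 : ¬ (0 ≤ n - 1) := by omega
    simp [rch, h1]
    intro h; omega
  · subst h; simp [rch]
  · obtain ⟨k, rfl⟩ : ∃ k : ℕ, n = k + 1 := ⟨(n - 1).toNat, by omega⟩
    have h1 : (0 : ℤ) ≤ k + 1 := by omega
    have h3 : ((k : ℤ) + 1).toNat = k + 1 := by omega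
    simp only [rch, h1, if_true, add_sub_cancel_right, Int.natCast_nonneg, Int.toNat_natCast, h3]
    have := fac_ne x hx k
    have h4 := pch_ne x hx k
    have h5 : pch x (k + 1) = pch x k * (1 + -(x ^ (k + 1))) := Finset.prod_range_succ _ _
    rw [h5, show x ^ ((k : ℤ) + 1) = x ^ (k + 1) by exact_mod_cast zpow_natCast x (k + 1)]
    field_simp
    ring

/-- finite theta product -/
noncomputable def fprod (x z : ℂ) (M N : ℕ) : ℂ :=
  (∏ k ∈ Finset.range M, (1 + x ^ (k + 1) * z)) * ∏ k ∈ Finset.range N, (1 + x ^ k * z⁻¹)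

/-- coefficients of the finite theta product -/
noncomputable def fterm (x z : ℂ) (M N : ℕ) (j : ℤ) : ℂ :=
  pch x (M + N) * rch x (M - j) * rch x (N + j) * (x ^ (j * (j + 1) / 2) * z ^ j)

theorem fterm_M (x z : ℂ) (hx0 : x ≠ 0) (hx : ‖x‖ < 1) (hz : z ≠ 0) (M N : ℕ) (j : ℤ) :
    fterm x z (M + 1) N (j + 1) =
      fterm x z M N (j + 1) + x ^ (M + 1) * z * fterm x z M N j := by
  have e1 := rch_rec x hx ((M : ℤ) - j)
  have e2 := rch_rec x hx ((N : ℤ) + (j + 1))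
  have h5 : pch x (M + N + 1) = pch x (M + N) * (1 + -(x ^ (M + N + 1))) :=
    Finset.prod_range_succ _ _
  have hA : x ^ (M + 1) = x ^ ((M : ℤ) - j) * x ^ (j + 1) := by
    rw [← zpow_add₀ hx0, ← zpow_natCast]; congr 1; push_cast; ring
  have hB : x ^ (M + N + 1) = x ^ ((M : ℤ) - j) * x ^ ((N : ℤ) + (j + 1)) := by
    rw [← zpow_add₀ hx0, ← zpow_natCast]; congr 1; push_cast; ring
  unfold fterm
  rw [show M + 1 + N = M + N + 1 by ring, h5, tri_succ, zpow_add₀ hx0 _ (j + 1), zpow_add_one₀ hz,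
    show ((M + 1 : ℕ) : ℤ) - (j + 1) = M - j by push_cast; ring,
    show (M : ℤ) - (j + 1) = M - j - 1 by ring, e1,
    show (N : ℤ) + j = N + (j + 1) - 1 by ring, e2, hA, hB]
  ring

theorem fterm_N (x z : ℂ) (hx0 : x ≠ 0) (hx : ‖x‖ < 1) (hz : z ≠ 0) (M N : ℕ) (j : ℤ) :
    fterm x z M (N + 1) j =
      fterm x z M N j + x ^ N * z⁻¹ * fterm x z M N (j + 1) := by
  have e1 := rch_rec x hx ((M : ℤ) - j)
  have e2 := rch_rec x hx ((N : ℤ) + (j + 1))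
  have h5 : pch x (M + N + 1) = pch x (M + N) * (1 + -(x ^ (M + N + 1))) :=
    Finset.prod_range_succ _ _
  have hA : x ^ ((N : ℤ) + (j + 1)) = x ^ N * x ^ (j + 1) := by
    rw [zpow_add₀ hx0, zpow_natCast]
  have hB : x ^ (M + N + 1) = x ^ ((M : ℤ) - j) * x ^ ((N : ℤ) + (j + 1)) := by
    rw [← zpow_add₀ hx0, ← zpow_natCast]; congr 1; push_cast; ring
  have hz1 : z ^ (j + 1) = z ^ j * z := zpow_add_one₀ hz j
  unfold fterm
  rw [show M + (N + 1) = M + N + 1 by ring, h5, tri_succ, zpow_add₀ hx0 _ (j + 1), hz1,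
    show ((N + 1 : ℕ) : ℤ) + j = N + (j + 1) by push_cast; ring,
    show (M : ℤ) - (j + 1) = M - j - 1 by ring, e1,
    show (N : ℤ) + j = N + (j + 1) - 1 by ring, e2, hB, hA]
  field_simp
  ring

theorem hasSum_fprod (x z : ℂ) (hx0 : x ≠ 0) (hx : ‖x‖ < 1) (hz : z ≠ 0) (M N : ℕ) :
    HasSum (fterm x z M N) (fprod x z M N) := by
  induction M with
  | zero =>
    induction N with
    | zero =>
      have : fprod x z 0 0 = fterm x z 0 0 0 := by simp [fprod, fterm, pch, rch]
      rw [this]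
      refine hasSum_single 0 fun j hj => ?_
      rcases lt_or_gt_of_ne hj with h | h
      · have : ¬ (0 ≤ j) := by omega
        simp [fterm, rch, this]
      · have : ¬ (j ≤ 0) := by omega
        simp [fterm, rch, this]
    | succ N ih =>
      have h2 := ((Equiv.addRight (1 : ℤ)).hasSum_iff.2 ih).mul_left (x ^ N * z⁻¹)
      have h3 := ih.add h2
      have h4 : fprod x z 0 (N + 1) = fprod x z 0 N + x ^ N * z⁻¹ * fprod x z 0 N := by
        simp only [fprod, Finset.prod_range_succ]; ring
      rw [h4]
      convert h3 using 1
      funext j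
      exact fterm_N x z hx0 hx hz 0 N j
  | succ M ih =>
    have h2 := ih.mul_left (x ^ (M + 1) * z)
    have h3 := ((Equiv.addRight (1 : ℤ)).hasSum_iff.2 ih).add h2
    have h4 : fprod x z (M + 1) N = fprod x z M N + x ^ (M + 1) * z * fprod x z M N := by
      simp only [fprod, Finset.prod_range_succ]; ring
    rw [h4, ← (Equiv.addRight (1 : ℤ)).hasSum_iff]
    convert h3 using 1
    funext j
    exact fterm_M x z hx0 hx hz M N j

theorem summable_real (r t : ℝ) (hr : 0 < r) (hr1 : r < 1) (ht : 0 < t) :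
    Summable fun j : ℤ => r ^ (j * (j + 1) / 2) * t ^ j := by
  have hl : Tendsto (fun n : ℕ => r ^ n) atTop (𝓝 0) :=
    tendsto_pow_atTop_nhds_zero_of_lt_one hr.le hr1
  refine Summable.of_nat_of_neg ?_ ?_
  · refine summable_of_ratio_test_tendsto_lt_one (l := 0) zero_lt_one
      (Eventually.of_forall fun n => by positivity) ?_
    have h1 : Tendsto (fun n : ℕ => r ^ n * (r * t)) atTop (𝓝 0) := by
      simpa using hl.mul_const (r * t)
    refine h1.congr fun n => ?_
    rw [Real.norm_of_nonneg (by positivity), Real.norm_of_nonneg (by positivity)]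
    push_cast
    rw [tri_succ, zpow_add₀ hr.ne', zpow_add_one₀ ht.ne', zpow_add_one₀ hr.ne', zpow_natCast r n]
    field_simp
  · refine summable_of_ratio_test_tendsto_lt_one (l := 0) zero_lt_one
      (Eventually.of_forall fun n => by positivity) ?_
    have h1 : Tendsto (fun n : ℕ => r ^ n * t⁻¹) atTop (𝓝 0) := by
      simpa using hl.mul_const (t⁻¹)
    refine h1.congr fun n => ?_
    rw [Real.norm_of_nonneg (by positivity), Real.norm_of_nonneg (by positivity)]
    have e := tri_succ (-((n + 1 : ℕ) : ℤ))
    rw [show -((n + 1 : ℕ) : ℤ) + 1 = -(n : ℤ) by push_cast; ring] at e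
    have e2 : -((n + 1 : ℕ) : ℤ) * (-((n + 1 : ℕ) : ℤ) + 1) / 2
        = -(n : ℤ) * (-(n : ℤ) + 1) / 2 + n := by
      rw [show -((n + 1 : ℕ) : ℤ) + 1 = -(n : ℤ) by push_cast; ring]
      omega
    rw [e2, zpow_add₀ hr.ne', zpow_natCast r n,
      show -((n + 1 : ℕ) : ℤ) = -(n : ℤ) - 1 by push_cast; ring, zpow_sub_one₀ ht.ne']
    field_simp

theorem pch_lim (x : ℂ) (hx : ‖x‖ < 1) : ∃ L : ℂ, L ≠ 0 ∧ Tendsto (pch x) atTop (𝓝 L) := by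
  have hs : Summable fun k : ℕ => ‖-(x ^ (k + 1))‖ := by
    simp only [norm_neg, norm_pow]
    simp only [pow_succ]
    exact (summable_geometric_of_lt_one (norm_nonneg x) hx).mul_right _
  exact ⟨_, tprod_one_add_ne_zero_of_summable (fac_ne x hx) hs,
    (multipliable_one_add_of_summable hs).tendsto_prod_tprod_nat⟩

theorem fprod_lim (x z : ℂ) (hx : ‖x‖ < 1) (h1 : ∀ k : ℕ, 1 + x ^ (k + 1) * z ≠ 0)
    (h2 : ∀ k : ℕ, 1 + x ^ k * z⁻¹ ≠ 0) :
    ∃ L : ℂ, L ≠ 0 ∧ Tendsto (fun N => fprod x z N N) atTop (𝓝 L) := by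
  have hg := summable_geometric_of_lt_one (norm_nonneg x) hx
  have hs : Summable fun k : ℕ => ‖x ^ (k + 1) * z‖ := by
    simp only [norm_mul, norm_pow, pow_succ]
    exact (hg.mul_right _).mul_right _
  have hs2 : Summable fun k : ℕ => ‖x ^ k * z⁻¹‖ := by
    simp only [norm_mul, norm_pow]
    exact hg.mul_right _
  exact ⟨_, mul_ne_zero (tprod_one_add_ne_zero_of_summable h1 hs)
    (tprod_one_add_ne_zero_of_summable h2 hs2),
    (multipliable_one_add_of_summable hs).tendsto_prod_tprod_nat.mul
    (multipliable_one_add_of_summable hs2).tendsto_prod_tprod_nat⟩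

theorem tsum_ne_zero_aux (x z : ℂ) (hx0 : x ≠ 0) (hx : ‖x‖ < 1) (hz : z ≠ 0)
    (h1 : ∀ k : ℕ, 1 + x ^ (k + 1) * z ≠ 0) (h2 : ∀ k : ℕ, 1 + x ^ k * z⁻¹ ≠ 0) :
    ∑' j : ℤ, x ^ (j * (j + 1) / 2) * z ^ j ≠ 0 := by
  obtain ⟨P, hP, hPl⟩ := fprod_lim x z hx h1 h2
  obtain ⟨L, hL, hLl⟩ := pch_lim x hx
  have hLi : Tendsto (fun n => (pch x n)⁻¹) atTop (𝓝 L⁻¹) := hLl.inv₀ hL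
  obtain ⟨A, hA⟩ := hLl.norm.bddAbove_range
  obtain ⟨B, hB⟩ := hLi.norm.bddAbove_range
  have hA' : ∀ n, ‖pch x n‖ ≤ A := fun n => hA ⟨n, rfl⟩
  have hB0 : 0 ≤ B := (norm_nonneg _).trans (hB ⟨0, rfl⟩)
  have hA0 : 0 ≤ A := (norm_nonneg _).trans (hA' 0)
  have hB' : ∀ n, ‖rch x n‖ ≤ B := by
    intro n
    unfold rch
    split_ifs
    · exact hB ⟨_, rfl⟩
    · simpa using hB0
  have hS := summable_real ‖x‖ ‖z‖ (norm_pos_iff.2 hx0) hx (norm_pos_iff.2 hz)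
  have hrl : ∀ u : ℕ → ℤ, Tendsto u atTop atTop → Tendsto (fun n => rch x (u n)) atTop (𝓝 L⁻¹) := by
    intro u hu
    have h3 : Tendsto (fun n => (u n).toNat) atTop atTop := by
      refine tendsto_atTop.2 fun b => ?_
      filter_upwards [hu.eventually_ge_atTop (b : ℤ)] with n hn
      omega
    refine (hLi.comp h3).congr' ?_
    filter_upwards [hu.eventually_ge_atTop 0] with n hn
    simp [rch, hn]
  have key : Tendsto (fun N : ℕ => ∑' j : ℤ, fterm x z N N j) atTop
      (𝓝 (∑' j : ℤ, L * L⁻¹ * L⁻¹ * (x ^ (j * (j + 1) / 2) * z ^ j))) := by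
    refine tendsto_tsum_of_dominated_convergence (hS.mul_left (A * B * B)) ?_ ?_
    · intro j
      unfold fterm
      refine Tendsto.mul_const _ (Tendsto.mul (Tendsto.mul ?_ ?_) ?_)
      · exact hLl.comp (tendsto_atTop_mono (fun n => Nat.le_add_right n n) tendsto_id)
      · apply hrl
        exact tendsto_atTop_add_const_right _ (-j) tendsto_natCast_atTop_atTop
      · apply hrl
        exact tendsto_atTop_add_const_right _ j tendsto_natCast_atTop_atTop
    · refine Eventually.of_forall fun N j => ?_
      unfold fterm
      rw [norm_mul, norm_mul, norm_mul, norm_mul, norm_zpow, norm_zpow]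
      gcongr
      · exact hA' _
      · exact hB' _
      · exact hB' _
  have key2 : Tendsto (fun N : ℕ => ∑' j : ℤ, fterm x z N N j) atTop (𝓝 P) :=
    hPl.congr fun N => (hasSum_fprod x z hx0 hx hz N N).tsum_eq.symm
  have h5 := tendsto_nhds_unique key key2
  rw [tsum_mul_left] at h5
  intro h0
  rw [h0, mul_zero] at h5
  exact hP h5.symm

theorem theta_eq (p z : ℂ) : theta p z = ∑' j : ℤ, p⁻¹ ^ (j * (j + 1) / 2) * z ^ j := by
  unfold theta
  refine tsum_congr fun j => ?_
  rw [inv_zpow']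

theorem thetaR_eq (p z : ℝ) : thetaR p z = ∑' j : ℤ, p⁻¹ ^ (j * (j + 1) / 2) * z ^ j := by
  unfold thetaR
  refine tsum_congr fun j => ?_
  rw [inv_zpow']

theorem theta_ne_zero (p z : ℂ) (hp : 1 < ‖p‖) (hz : z ≠ 0) (h : ∀ n : ℤ, z + p ^ n ≠ 0) :
    theta p z ≠ 0 := by
  have hp0 : p ≠ 0 := by rintro rfl; simp at hp; linarith
  rw [theta_eq]
  refine tsum_ne_zero_aux _ _ (inv_ne_zero hp0) ?_ hz ?_ ?_
  · rw [norm_inv]; exact inv_lt_one_of_one_lt₀ hp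
  · intro k hk
    apply h (k + 1 : ℕ)
    rw [zpow_natCast]
    have hpk := pow_ne_zero (k + 1) hp0
    rw [inv_pow] at hk
    field_simp at hk
    linear_combination hk
  · intro k hk
    apply h (-(k : ℤ))
    rw [zpow_neg, zpow_natCast, ← inv_pow]
    field_simp at hk
    have hpk := pow_ne_zero k hp0
    rw [inv_pow]
    linear_combination hk

theorem theta_mul (p z : ℂ) (hp0 : p ≠ 0) (hz : z ≠ 0) : theta p (p * z) = z * theta p z := by
  rw [theta_eq, theta_eq, ← tsum_mul_left, ← (Equiv.addRight (1 : ℤ)).tsum_eq]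
  refine tsum_congr fun j => ?_
  simp only [Equiv.coe_addRight]
  rw [tri_succ, zpow_add₀ (inv_ne_zero hp0), zpow_add_one₀ (mul_ne_zero hp0 hz), mul_zpow,
    zpow_add_one₀ (inv_ne_zero hp0), inv_zpow p j]
  have := zpow_ne_zero j hp0
  field_simp

theorem thetaR_mul (p z : ℝ) (hp0 : p ≠ 0) (hz : z ≠ 0) :
    thetaR p (p * z) = z * thetaR p z := by
  rw [thetaR_eq, thetaR_eq, ← tsum_mul_left, ← (Equiv.addRight (1 : ℤ)).tsum_eq]
  refine tsum_congr fun j => ?_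
  simp only [Equiv.coe_addRight]
  rw [tri_succ, zpow_add₀ (inv_ne_zero hp0), zpow_add_one₀ (mul_ne_zero hp0 hz), mul_zpow,
    zpow_add_one₀ (inv_ne_zero hp0), inv_zpow p j]
  have := zpow_ne_zero j hp0
  field_simp

theorem main_aux (p : ℂ) (hp : 1 < ‖p‖) (ε : ℝ) (hε : 0 < ε) :
    ∃ C > 0, ∀ z : ℂ, z ≠ 0 → (∀ n : ℤ, ε * ‖p ^ n‖ ≤ ‖z + p ^ n‖) →
      C * thetaR ‖p‖ ‖z‖ ≤ ‖theta p z‖ := by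
  have hp0 : p ≠ 0 := by rintro rfl; simp at hp; linarith
  have hR0 : 0 < ‖p‖ := by linarith
  have hx : ‖p‖⁻¹ < 1 := inv_lt_one_of_one_lt₀ hp
  have hx0 : 0 < ‖p‖⁻¹ := inv_pos.2 hR0
  set S : Set ℂ := {z | 1 ≤ ‖z‖ ∧ ‖z‖ ≤ ‖p‖ ∧ ∀ n : ℤ, ε * ‖p ^ n‖ ≤ ‖z + p ^ n‖} with hSdef
  have hS0 : ∀ z ∈ S, z ≠ 0 := by
    rintro z ⟨h, -⟩ rfl
    simp at h; linarith
  have hclosed : IsClosed S := by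
    have h3 : IsClosed (⋂ n : ℤ, {z : ℂ | ε * ‖p ^ n‖ ≤ ‖z + p ^ n‖}) :=
      isClosed_iInter fun n => isClosed_le continuous_const (by fun_prop)
    have h4 : S = {z : ℂ | 1 ≤ ‖z‖} ∩ ({z : ℂ | ‖z‖ ≤ ‖p‖} ∩
        ⋂ n : ℤ, {z : ℂ | ε * ‖p ^ n‖ ≤ ‖z + p ^ n‖}) := by
      ext z; simp [hSdef]
    rw [h4]
    exact (isClosed_le continuous_const continuous_norm).inter
      ((isClosed_le continuous_norm continuous_const).inter h3)
  have hcomp : IsCompact S :=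
    (isCompact_closedBall (0 : ℂ) ‖p‖).of_isClosed_subset hclosed
      fun z hz => by simpa using hz.2.1
  set u : ℤ → ℝ := fun j =>
    ‖p‖⁻¹ ^ (j * (j + 1) / 2) * ‖p‖ ^ j + ‖p‖⁻¹ ^ (j * (j + 1) / 2) * 1 ^ j with hu
  have hus : Summable u :=
    (summable_real _ _ hx0 hx hR0).add (summable_real _ _ hx0 hx one_pos)
  have hbd : ∀ (j : ℤ), ∀ z ∈ S, ‖p‖⁻¹ ^ (j * (j + 1) / 2) * ‖z‖ ^ j ≤ u j := by
    intro j z hz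
    rw [hu]
    simp only [one_zpow, ← mul_add]
    gcongr
    have h1 := hz.1
    have h2 := hz.2.1
    have h3 : 0 < ‖p‖ ^ j := by positivity
    rcases le_total 0 j with h | h
    · have := zpow_le_zpow_left₀ h (norm_nonneg z) h2
      linarith
    · have := zpow_le_one_of_nonpos₀ h1 h
      linarith
  have hcont : ContinuousOn (fun z => theta p z) S := by
    simp only [theta_eq]
    refine continuousOn_tsum ?_ hus ?_
    · intro j
      refine continuousOn_const.mul ?_
      exact continuousOn_id.zpow₀ j fun z hz => Or.inl (hS0 z hz)
    · intro j z hz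
      rw [norm_mul, norm_zpow, norm_zpow, norm_inv]
      exact hbd j z hz
  obtain ⟨c, hc, hcS⟩ := hcomp.exists_forall_le' (a := 0) hcont.norm (by
    intro z hz
    refine norm_pos_iff.2 (theta_ne_zero p z hp (hS0 z hz) fun n hn => ?_)
    have h1 := hz.2.2 n
    rw [hn, norm_zero] at h1
    have : 0 < ε * ‖p ^ n‖ := mul_pos hε (norm_pos_iff.2 (zpow_ne_zero n hp0))
    linarith)
  have hD : ∀ z ∈ S, thetaR ‖p‖ ‖z‖ ≤ ∑' j, u j := by
    intro z hz
    rw [thetaR_eq]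
    exact (summable_real _ _ hx0 hx (norm_pos_iff.2 (hS0 z hz))).tsum_le_tsum
      (fun j => hbd j z hz) hus
  have hD0 : 0 ≤ ∑' j, u j := tsum_nonneg fun j => by rw [hu]; positivity
  set D := ∑' j, u j with hDdef
  have hSC : ∀ z ∈ S, c / (D + 1) * thetaR ‖p‖ ‖z‖ ≤ ‖theta p z‖ := by
    intro z hz
    have h1 := hD z hz
    have h2 := hcS z hz
    refine le_trans ?_ h2
    rw [div_mul_eq_mul_div, div_le_iff₀ (by linarith)]
    exact mul_le_mul_of_nonneg_left (by linarith) hc.le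
  refine ⟨c / (D + 1), by positivity, ?_⟩
  have hstep : ∀ z : ℂ, z ≠ 0 → (c / (D + 1) * thetaR ‖p‖ ‖z‖ ≤ ‖theta p z‖ ↔
      c / (D + 1) * thetaR ‖p‖ ‖p * z‖ ≤ ‖theta p (p * z)‖) := by
    intro z hz
    have hzp := norm_pos_iff.2 hz
    rw [theta_mul p z hp0 hz, norm_mul p z, thetaR_mul _ _ hR0.ne' hzp.ne', norm_mul,
      mul_left_comm, mul_le_mul_iff_right₀ (by positivity)]
  have hsteps : ∀ (n : ℤ) (z : ℂ), z ≠ 0 → (c / (D + 1) * thetaR ‖p‖ ‖z‖ ≤ ‖theta p z‖ ↔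
      c / (D + 1) * thetaR ‖p‖ ‖p ^ n * z‖ ≤ ‖theta p (p ^ n * z)‖) := by
    intro n z hz
    induction n using Int.induction_on with
    | zero => simp
    | succ i ih =>
      rw [ih, hstep _ (mul_ne_zero (zpow_ne_zero _ hp0) hz), ← mul_assoc, ← zpow_one_add₀ hp0,
        add_comm (1 : ℤ)]
    | pred i ih =>
      rw [ih, hstep (p ^ (-(i : ℤ) - 1) * z) (mul_ne_zero (zpow_ne_zero _ hp0) hz), ← mul_assoc,
        ← zpow_one_add₀ hp0, add_sub_cancel]
  intro z hz hΩ
  obtain ⟨n, hn1, hn2⟩ := exists_mem_Ico_zpow (norm_pos_iff.2 hz) hp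
  rw [hsteps (-n) z hz]
  have hpn : 0 < ‖p‖ ^ n := by positivity
  apply hSC
  refine ⟨?_, ?_, ?_⟩
  · rw [norm_mul, norm_zpow, zpow_neg, ← div_eq_inv_mul, le_div_iff₀ hpn]
    linarith
  · rw [norm_mul, norm_zpow, zpow_neg, ← div_eq_inv_mul, div_le_iff₀ hpn, ← zpow_one_add₀ hR0.ne',
      add_comm]
    exact hn2.le
  · intro k
    have h := hΩ (n + k)
    have e : p ^ (-n) * z + p ^ k = p ^ (-n) * (z + p ^ (n + k)) := by
      rw [mul_add, ← zpow_add₀ hp0, neg_add_cancel_left]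
    have e2 : p ^ k = p ^ (-n) * p ^ (n + k) := by
      rw [← zpow_add₀ hp0, neg_add_cancel_left]
    rw [e, norm_mul]
    nth_rewrite 1 [e2]
    rw [norm_mul, mul_left_comm]
    gcongr

/-- for `(μ,K) ∈ ℚ_{>0} × ℕ*` with `K ∈ μℕ*` and `ε > 0`, on the domain
`Ω = ∩_{ℓ∈K⁻¹ℤ} {z ∈ ℂ* : |z + q^ℓ| ≥ ε|q^ℓ|}` one has
`|Θ_{q^{1/μ}}(z)| ≥ C · Θ_{|q|^{1/μ}}(|z|)` for some constant `C > 0`. -/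
theorem theta_lower_bound (q : ℂ) (hq : 1 < ‖q‖) (μ : ℚ) (hμ : 0 < μ) (K : ℕ) (hK : 0 < K)
    (hKμ : ∃ m : ℕ, 0 < m ∧ (K : ℚ) = μ * m) (ε : ℝ) (hε : 0 < ε) :
    ∃ C > 0, ∀ z : ℂ, z ≠ 0 →
      (∀ j : ℤ, ε * ‖qpow q ((j : ℚ) / K)‖ ≤ ‖z + qpow q ((j : ℚ) / K)‖) →
      C * thetaR (qpowR ‖q‖ (1 / μ)) ‖z‖ ≤ ‖theta (qpow q (1 / μ)) z‖ := by
  obtain ⟨m, hm, hKm⟩ := hKμ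
  have hq0 : q ≠ 0 := by rintro rfl; simp at hq; linarith
  have hqn : 0 < ‖q‖ := by linarith
  have hnorm : qpowR ‖q‖ (1 / μ) = ‖qpow q (1 / μ)‖ := by
    unfold qpowR qpow
    rw [Complex.norm_exp, Real.rpow_def_of_pos hqn, mul_comm]
    congr 1
    have : (((1 / μ : ℚ)) : ℂ) = (((1 / μ : ℚ) : ℝ) : ℂ) := by push_cast; rfl
    rw [this, Complex.re_ofReal_mul, Complex.log_re]
  have hp : 1 < ‖qpow q (1 / μ)‖ := by
    rw [← hnorm]
    unfold qpowR
    apply Real.one_lt_rpow hq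
    exact_mod_cast (by positivity : (0 : ℚ) < 1 / μ)
  have hpow : ∀ n : ℤ, qpow q (1 / μ) ^ n = qpow q (((n * m : ℤ) : ℚ) / K) := by
    intro n
    unfold qpow
    rw [← Complex.exp_int_mul, ← mul_assoc]
    congr 2
    have : ((n * m : ℤ) : ℚ) / K = n * (1 / μ) := by
      rw [hKm]
      have : (m : ℚ) ≠ 0 := by exact_mod_cast hm.ne'
      push_cast
      field_simp
    rw [this]
    push_cast
    rfl
  obtain ⟨C, hC, h⟩ := main_aux (qpow q (1 / μ)) hp ε hε
  refine ⟨C, hC, fun z hz hΩ => ?_⟩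
  rw [hnorm]
  refine h z hz fun n => ?_
  rw [hpow]
  exact hΩ (n * m)
end

section
/- Let (μ,K) ∈ ℚ_{>0} × ℕ* with K ∈ μℕ*, λ ∈ ℂ*, and let g ∈ ℍ^{[λ]}_{μ,K}. Then σ_q^{1/K} g (defined by (σ_q^{1/K} g)(ζ) := g(q^{1/K} ζ)) also belongs to ℍ^{[λ]}_{μ,K}, and the q-Laplace transform satisfies L^{[λ]}_{μ,K}(σ_q^{1/K} g)(z) = L^{[λ]}_{μ,K}(g)(q^{1/K} z) for every z ∈ ℂ* near 0 with z, q^{1/K}z ∉ −λq^{K^{−1}ℤ}. -/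
/-- The `ε`-neighborhood of the discrete `q^{1/K}`-spiral `λ q^{K⁻¹ℤ}` in `ℂ*`:
`∪_{ℓ∈K⁻¹ℤ} {z ∈ ℂ* : |z - q^ℓ λ| < ε |q^ℓ λ|}`. -/
def spiralNhd (q lam : ℂ) (K : ℕ) (ε : ℝ) : Set ℂ :=
  {z : ℂ | z ≠ 0 ∧ ∃ j : ℤ,
    ‖z - qpow q ((j : ℚ) / K) * lam‖ < ε * ‖qpow q ((j : ℚ) / K) * lam‖}

/-- Membership in the space `ℍ^{[λ]}_{μ,K}`: `f` is meromorphic on a punctured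
neighborhood of `0` in `ℂ*` and can be continued analytically to a connected domain `Ω`
containing an `ε`-neighborhood of the spiral `λ q^{K⁻¹ℤ}`, with
`q^{1/μ}`-exponential growth of order 1 at infinity:
`|f(z)| < L·Θ_{|q|^{1/μ}}(M|z|)` on `Ω`. -/
def memH (q : ℂ) (μ : ℚ) (K : ℕ) (lam : ℂ) (f : ℂ → ℂ) : Prop :=
  (∃ r > 0, MeromorphicOn f {z : ℂ | z ≠ 0 ∧ ‖z‖ < r}) ∧
  ∃ ε > 0, ∃ Ω : Set ℂ, IsOpen Ω ∧ IsConnected Ω ∧ spiralNhd q lam K ε ⊆ Ω ∧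
    AnalyticOnNhd ℂ f Ω ∧
    ∃ L > 0, ∃ M > 0, ∀ z ∈ Ω, ‖f z‖ < L * thetaR (qpowR ‖q‖ (1 / μ)) (M * ‖z‖)

/-- The `q`-Laplace transform of order `μ` in the direction `λ`:
`L^{[λ]}_{μ,K}(f)(z) = (μ/K) ∑_{ℓ∈K⁻¹ℤ} f(q^ℓ λ) / Θ_{q^{1/μ}}(q^{1/μ+ℓ} λ / z)`. -/
noncomputable def qLaplace (q : ℂ) (μ : ℚ) (K : ℕ) (lam : ℂ) (f : ℂ → ℂ) (z : ℂ) : ℂ :=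
  ((μ : ℂ) / (K : ℂ)) * ∑' j : ℤ, f (qpow q ((j : ℚ) / K) * lam) /
    theta (qpow q (1 / μ)) (qpow q (1 / μ + (j : ℚ) / K) * lam / z)

theorem qpow_add' (q : ℂ) (a b : ℚ) : qpow q (a + b) = qpow q a * qpow q b := by
  unfold qpow
  rw [← Complex.exp_add]
  congr 1
  push_cast
  ring

theorem qpow_ne_zero' (q : ℂ) (a : ℚ) : qpow q a ≠ 0 := Complex.exp_ne_zero _

theorem qpow_succ' (q : ℂ) (K : ℕ) (j : ℤ) :
    qpow q (((j + 1 : ℤ) : ℚ) / K) = qpow q (1 / K) * qpow q ((j : ℚ) / K) := by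
  rw [← qpow_add']
  congr 1
  push_cast
  ring

/-- if `g ∈ ℍ^{[λ]}_{μ,K}` then `σ_q^{1/K} g ∈ ℍ^{[λ]}_{μ,K}` and
`L^{[λ]}_{μ,K}(σ_q^{1/K} g)(z) = L^{[λ]}_{μ,K}(g)(q^{1/K} z)` for `z ∈ ℂ*` near `0`
off the spirals. -/
theorem qLaplace_sigma (q : ℂ) (hq : 1 < ‖q‖) (μ : ℚ) (hμ : 0 < μ) (K : ℕ) (hK : 0 < K)
    (hKμ : ∃ m : ℕ, 0 < m ∧ (K : ℚ) = μ * m) (lam : ℂ) (hlam : lam ≠ 0)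
    (g : ℂ → ℂ) (hg : memH q μ K lam g) :
    memH q μ K lam (fun ζ => g (qpow q (1 / K) * ζ)) ∧
    ∃ r > 0, ∀ z : ℂ, z ≠ 0 → ‖z‖ < r →
      (∀ j : ℤ, z ≠ -(qpow q ((j : ℚ) / K) * lam)) →
      (∀ j : ℤ, qpow q (1 / K) * z ≠ -(qpow q ((j : ℚ) / K) * lam)) →
      qLaplace q μ K lam (fun ζ => g (qpow q (1 / K) * ζ)) z
        = qLaplace q μ K lam g (qpow q (1 / K) * z) := by
  have hp : qpow q (1 / K) ≠ 0 := qpow_ne_zero' q _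
  have hpn : 0 < ‖qpow q (1 / K)‖ := norm_pos_iff.mpr hp
  have hsucc := qpow_succ' q K
  have hadd : ∀ j : ℤ, qpow q (1 / μ + ((j + 1 : ℤ) : ℚ) / K)
      = qpow q (1 / K) * qpow q (1 / μ + (j : ℚ) / K) := by
    intro j
    rw [qpow_add', hsucc, qpow_add']
    ring
  generalize qpow q (1 / K) = p at *
  refine ⟨?_, 1, one_pos, ?_⟩
  · obtain ⟨⟨r, hr, hmer⟩, ε, hε, Ω, hΩo, hΩc, hsub, han, L, hL, M, hM, hbd⟩ := hg
    refine ⟨⟨r / ‖p‖, by positivity, ?_⟩, ε, hε, (fun z => p * z) ⁻¹' Ω,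
      hΩo.preimage (by fun_prop), ?_, ?_, ?_, L, hL, M * ‖p‖, by positivity, ?_⟩
    · rintro z ⟨hz, hzr⟩
      have h1 : MeromorphicAt g (p * z) := by
        apply hmer
        refine ⟨mul_ne_zero hp hz, ?_⟩
        rw [norm_mul, mul_comm]
        exact (lt_div_iff₀ hpn).mp hzr
      have h2 : AnalyticAt ℂ (fun z => p * z) z := by fun_prop
      exact h1.comp_analyticAt h2
    · have : (fun z => p * z) ⁻¹' Ω = (fun z => p⁻¹ * z) '' Ω := by
        ext z
        constructor
        · intro h
          exact ⟨p * z, h, by field_simp⟩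
        · rintro ⟨w, hw, rfl⟩
          have : p * (p⁻¹ * w) = w := by field_simp
          simpa [this] using hw
      rw [this]
      exact hΩc.image _ (by fun_prop)
    · rintro z ⟨hz, j, hj⟩
      apply hsub
      refine ⟨mul_ne_zero hp hz, j + 1, ?_⟩
      rw [hsucc, mul_assoc, ← mul_sub, norm_mul, norm_mul p]
      calc _ < ‖p‖ * (ε * ‖qpow q ((j : ℚ) / K) * lam‖) := by gcongr
        _ = _ := by ring
    · intro z hz
      have h2 : AnalyticAt ℂ (fun z => p * z) z := by fun_prop
      exact AnalyticAt.fun_comp (f := fun z => p * z) (han _ hz) h2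
    · intro z hz
      have := hbd _ hz
      rwa [norm_mul, ← mul_assoc] at this
  · intro z hz _ _ _
    unfold qLaplace
    congr 1
    symm
    rw [← (Equiv.addRight (1 : ℤ)).tsum_eq]
    apply tsum_congr
    intro j
    simp only [Equiv.coe_addRight]
    rw [hsucc, hadd, mul_assoc, mul_assoc p, mul_div_mul_left _ _ hp]
end
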